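/- Consider the zig-zag triangulation of an n-gon whose triangles are θ_i = (i, i+1, i+2) for 1 ≤ i ≤ n−2, with the default orientation, and define λ_{k,n} and [k,k+1,n] by the downward super Ptolemy recursion obtained by flipping the arcs (n−1,n−2), (n−2,n−3), …, (k+2,k+1) as in Theorem 6.4(a). Then for every k: λ_{k,n} = Σ_{t ∈ 𝒯_{k,n}} wt(t), the sum of the weights of all super T-paths from k to n in the zig-zag triangulation. -/

import Mathlib

namespace ZigZag

/-!  Combinatorics of the zig-zag triangulation of an `n`-gon.

The vertices are labelled `1, …, n`; in convex position their cyclic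
(counterclockwise) order is `1, 2, 4, 6, …, n, n-1, …, 5, 3`.  The triangles are
`θ_i = (i, i+1, i+2)` for `1 ≤ i ≤ n-2`; the internal diagonals are `(j, j+1)`
for `2 ≤ j ≤ n-2` and the other pairs `(j, j+1)`, `(j, j+2)` are boundary edges.
The default orientation orients the diagonals `2 → 3 → ⋯ → n-1`. -/

/-- The position of the labelled vertex `v` in the convex (counterclockwise)
cyclic order `1, 2, 4, 6, …, n, n-1, …, 5, 3` of the `n`-gon. -/
def pos (n v : ℕ) : ℕ :=
  if v = 1 then 0 else if v % 2 = 0 then v / 2 else n - (v - 1) / 2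

/-- For an oriented chord of the convex polygon going from position `u` to
position `v`, the position `w` lies (strictly) on its left side. -/
def inLeft (u v w : ℕ) : Bool :=
  if u < v then decide (u < w ∧ w < v) else decide (w < v ∨ u < w)

/-- The triangle `θ_k = (k, k+1, k+2)` lies to the right of the diagonal
`(k+1, k+2)` equipped with its default orientation `k+1 → k+2`. -/
def thetaRight (n k : ℕ) : Bool :=
  ! inLeft (pos n (k + 1)) (pos n (k + 2)) (pos n k)

/-- The positive ordering on the triangles `θ_i` of the zig-zag triangulation
(with the default orientation), as a `Bool`-valued "comes before" relation: for
`i < j`, `θ_i` comes first iff `θ_i` is to the right of the oriented diagonal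
separating `θ_i` from `θ_{i+1}`. -/
def posBefore (n i j : ℕ) : Bool :=
  if i < j then thetaRight n i else if j < i then ! thetaRight n j else true

/-- Insertion into a sorted list (used to reorder the odd factors of a weight
into the positive ordering). -/
def insB {α : Type*} (le : α → α → Bool) (x : α) : List α → List α
  | [] => [x]
  | y :: t => if le x y then x :: y :: t else y :: insB le x t

/-- Insertion sort along a `Bool`-valued "comes before" relation. -/
def sortB {α : Type*} (le : α → α → Bool) : List α → List α
  | [] => []
  | x :: t => insB le x (sortB le t)

/-- Edges of the zig-zag triangulation (including boundary edges): the pairs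
`{u, u+1}` and `{u, u+2}` with all labels in `{1, …, n}`. -/
def ZEdge (n u v : ℕ) : Prop :=
  1 ≤ u ∧ u ≤ n ∧ 1 ≤ v ∧ v ≤ n ∧
    (v = u + 1 ∨ u = v + 1 ∨ v = u + 2 ∨ u = v + 2)

/-- Vertices of the auxiliary graph for the arc `(j₀, n)`: `Sum.inl u` is the
polygon vertex labelled `u`, and `Sum.inr i` is the internal vertex `θ_i` placed
in the face `(i, i+1, i+2)` (for `j₀ ≤ i ≤ n-2`, the faces crossed by the
arc). -/
abbrev V := ℕ ⊕ ℕ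

/-- Adjacency in the auxiliary graph of the zig-zag triangulation for the arc
`(j₀, n)`: edges of the triangulation, `σ`-edges `σ_i = (θ_i, i+1)` joining each
internal vertex to its fan center `i+1`, and `τ`-edges `τ_{ij} = (θ_i, θ_j)`. -/
def ZJoins (n j0 : ℕ) : V → V → Prop
  | Sum.inl u, Sum.inl v => ZEdge n u v
  | Sum.inl u, Sum.inr i => u = i + 1 ∧ j0 ≤ i ∧ i + 2 ≤ n
  | Sum.inr i, Sum.inl u => u = i + 1 ∧ j0 ≤ i ∧ i + 2 ≤ n
  | Sum.inr i, Sum.inr i' => i ≠ i' ∧ j0 ≤ i ∧ i + 2 ≤ n ∧ j0 ≤ i' ∧ i' + 2 ≤ n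

/-- `ZCrossPos n j0 e m` : the auxiliary edge with endpoint pair `e` crosses the
arc `(j₀, n)`, the crossing occurring at linear position `m` along the arc:
diagonals `(w, w+1)` with `j₀+1 ≤ w ≤ n-2` at position `2w`, and `σ`-edges
`σ_i` at position `2i+1`; `τ`-edges and boundary edges do not cross. -/
def ZCrossPos (n j0 : ℕ) : V × V → ℕ → Prop
  | (Sum.inl u, Sum.inl v), m =>
      ∃ w, ((u = w ∧ v = w + 1) ∨ (v = w ∧ u = w + 1)) ∧
        j0 + 1 ≤ w ∧ w + 2 ≤ n ∧ m = 2 * w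
  | (Sum.inl _, Sum.inr i), m => m = 2 * i + 1
  | (Sum.inr i, Sum.inl _), m => m = 2 * i + 1
  | (Sum.inr _, Sum.inr _), _ => False

/-- The endpoint pair is a `σ`-edge. -/
def isSig : V × V → Prop
  | (Sum.inl _, Sum.inr _) => True
  | (Sum.inr _, Sum.inl _) => True
  | _ => False

/-- The endpoint pair is a `τ`-edge. -/
def isTau : V × V → Prop
  | (Sum.inr _, Sum.inr _) => True
  | _ => False

/-- Equality of auxiliary edges, as unordered pairs of endpoints. -/
def pairEqV (p q : V × V) : Prop :=
  (p.1 = q.1 ∧ p.2 = q.2) ∨ (p.1 = q.2 ∧ p.2 = q.1)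

/-- A super `T`-path in the zig-zag triangulation of the `n`-gon, along the arc
`(j₀, n)`; if `rev = false` it goes from `j₀` to `n`, and if `rev = true` from
`n` to `j₀` (so that the crossing positions must decrease).  The axioms are
(T1)–(T7) of Definition 5.3 of the paper:  a sequence of vertices of the
auxiliary graph joined by pairwise distinct edges, of odd length, with
even-numbered edges crossing the arc (`σ`-edges counting as crossing),
`σ`-edges only at even and `τ`-edges only at odd positions, and crossings
occurring in order from the starting vertex. -/
structure SuperTPath (n j0 : ℕ) (rev : Bool) where
  len : ℕ
  vert : Fin (len + 1) → V
  odd_len : Odd len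
  first_eq : vert 0 = Sum.inl (if rev then n else j0)
  last_eq : vert (Fin.last len) = Sum.inl (if rev then j0 else n)
  joins : ∀ i : Fin len, ZJoins n j0 (vert i.castSucc) (vert i.succ)
  edges_distinct : ∀ i i' : Fin len, i ≠ i' →
    ¬ pairEqV (vert i.castSucc, vert i.succ) (vert i'.castSucc, vert i'.succ)
  even_cross : ∀ i : Fin len, Odd i.val →
    ∃ m, ZCrossPos n j0 (vert i.castSucc, vert i.succ) m
  sig_even : ∀ i : Fin len, isSig (vert i.castSucc, vert i.succ) → Odd i.val
  tau_odd : ∀ i : Fin len, isTau (vert i.castSucc, vert i.succ) → Even i.val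
  cross_mono : ∀ i i' : Fin len, i < i' → ∀ m m',
    ZCrossPos n j0 (vert i.castSucc, vert i.succ) m →
    ZCrossPos n j0 (vert i'.castSucc, vert i'.succ) m' →
    (if rev then m' < m else m < m')

variable {A : Type*} [Ring A]

/-- `λ`-length of an edge, with the endpoints sorted. -/
def lamE (lam : ℕ → ℕ → A) (u v : ℕ) : A := lam (min u v) (max u v)

/-- The even (scalar) part of the weight of the `k`-th step of a super `T`-path
(steps numbered from `0`; the step is an odd step of the path iff `k` is even):
an edge of the triangulation contributes its `λ`-length at odd steps and the
inverse of its `λ`-length at even steps, a `σ`-edge `σ_i` contributes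
`√(λ_{i,i+2}/(λ_{i,i+1}λ_{i+1,i+2}))`, and a `τ`-edge contributes `1`. -/
noncomputable def stepWt (lam : ℕ → ℕ → A) (sqrt : A → A) (k : ℕ) : V × V → A
  | (Sum.inl u, Sum.inl v) =>
      if k % 2 = 0 then lamE lam u v else Ring.inverse (lamE lam u v)
  | (Sum.inl _, Sum.inr i) =>
      sqrt (lamE lam i (i + 2) *
        Ring.inverse (lamE lam i (i + 1) * lamE lam (i + 1) (i + 2)))
  | (Sum.inr i, Sum.inl _) =>
      sqrt (lamE lam i (i + 2) *
        Ring.inverse (lamE lam i (i + 1) * lamE lam (i + 1) (i + 2)))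
  | (Sum.inr _, Sum.inr _) => 1

/-- The index of the face whose `σ`-edge is used at a given step, if any. -/
def sigIdx : V × V → Option ℕ
  | (Sum.inl _, Sum.inr i) => some i
  | (Sum.inr i, Sum.inl _) => some i
  | _ => none

/-- The weight of a super `T`-path: the ordered product of the even parts of the
step weights, times the product of the odd `μ`-invariants `θ_i` of the faces
whose `σ`-edges are used, taken in the positive ordering. -/
noncomputable def wt (n : ℕ) (lam : ℕ → ℕ → A) (θ : ℕ → A) (sqrt : A → A)
    {j0 : ℕ} {rev : Bool} (t : SuperTPath n j0 rev) : A :=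
  ((List.finRange t.len).map
      (fun i => stepWt lam sqrt i.val (t.vert i.castSucc, t.vert i.succ))).prod *
  ((sortB (posBefore n)
      ((List.finRange t.len).filterMap
        (fun i => sigIdx (t.vert i.castSucc, t.vert i.succ)))).map θ).prod

/-- The weight of the `σ`-edge `σ_i` (including its odd factor `θ_i`). -/
noncomputable def sigWt (lam : ℕ → ℕ → A) (θ : ℕ → A) (sqrt : A → A) (i : ℕ) : A :=
  sqrt (lamE lam i (i + 2) *
    Ring.inverse (lamE lam i (i + 1) * lamE lam (i + 1) (i + 2))) * θ i

/-- The consecutive pairs of a vertex list. -/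
def edges : List V → List (V × V)
  | a :: b :: l => (a, b) :: edges (b :: l)
  | _ => []

/-- The conditions on a single step of a super `T`-path, taken with parity `p`. -/
def StepOK (n j0 p : ℕ) (e : V × V) : Prop :=
  ZJoins n j0 e.1 e.2 ∧ (Odd p → ∃ m, ZCrossPos n j0 e m) ∧
    (isSig e → Odd p) ∧ (isTau e → Even p)

/-- The stepwise conditions on a final segment of a super `T`-path whose first step is the one
numbered `p`; the total number of steps has to be odd. -/
def StepsOK (n j0 : ℕ) : ℕ → List (V × V) → Prop
  | p, [] => Odd p
  | p, e :: es => StepOK n j0 p e ∧ StepsOK n j0 (p + 1) es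

/-- Crossings of `e` come before crossings of `e'`. -/
def Ahead (n j0 : ℕ) (e e' : V × V) : Prop :=
  ∀ m m', ZCrossPos n j0 e m → ZCrossPos n j0 e' m' → m < m'

/-- The situation of a super `T`-path after a step: `free k` at the vertex `k` before an odd step;
`near u` at the vertex `u + 1` before an even step, with only crossings after `(u, u + 1)` left;
`far u` at the vertex `u + 2` before an even step, with `(u + 1, u + 2)` still available. -/
inductive State
  | free (k : ℕ)
  | near (u : ℕ)
  | far (u : ℕ)

namespace State

def idx : State → ℕ
  | free k => k
  | near u => u
  | far u => u

def parity : State → ℕ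
  | free _ => 0
  | near _ => 1
  | far _ => 1

def vertex : State → ℕ
  | free k => k
  | near u => u + 1
  | far u => u + 2

/-- A lower bound for the polygon vertices that can still be visited. -/
def outerBound : State → ℕ
  | free k => k
  | near u => u + 1
  | far u => u + 1

/-- A lower bound for the internal vertices that can still be visited. -/
def innerBound : State → ℕ
  | free k => k
  | near u => u
  | far u => u + 1

/-- A lower bound for the crossing positions that can still occur. -/
def crossBound : State → ℕ
  | free k => 2 * k
  | near u => 2 * u + 1
  | far u => 2 * u + 2

end State

/-- The vertex lists of the final segments of super `T`-paths ending at `n`, described by a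
transition system on `State`. -/
inductive Walk (n : ℕ) : State → List V → Prop
  | free_near {k l} : Walk n (.near k) l → Walk n (.free k) (Sum.inl k :: l)
  | free_far {k l} : Walk n (.far k) l → Walk n (.free k) (Sum.inl k :: l)
  | near_end {u} : u + 1 = n → Walk n (.near u) [Sum.inl (u + 1)]
  | near_up {u l} : u + 3 ≤ n → Walk n (.free (u + 2)) l →
      Walk n (.near u) (Sum.inl (u + 1) :: l)
  | near_inner {u j l} : u < j → j + 2 ≤ n → Walk n (.free (j + 1)) l →
      Walk n (.near u) (Sum.inl (u + 1) :: Sum.inr u :: Sum.inr j :: l)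
  | far_near {u l} : Walk n (.near (u + 1)) l → Walk n (.far u) l
  | far_down {u l} : u + 3 ≤ n → Walk n (.far (u + 1)) l →
      Walk n (.far u) (Sum.inl (u + 2) :: Sum.inl (u + 1) :: l)

lemma edges_cons {a b : V} {l : List V} (h : l.head? = some b) :
    edges (a :: l) = (a, b) :: edges l := by
  cases l with
  | nil => simp at h
  | cons c l => simp_all [edges]

lemma mem_of_mem_edges {l : List V} {e : V × V} (h : e ∈ edges l) : e.1 ∈ l ∧ e.2 ∈ l := by
  induction l with
  | nil => simp [edges] at h
  | cons a l ih =>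
    cases l with
    | nil => simp [edges] at h
    | cons b l =>
      rw [edges, List.mem_cons] at h
      rcases h with rfl | h
      · simp
      · have := ih h
        simp_all

lemma not_pairEqV_of_notMem {l : List V} {a b : V} (ha : a ∉ l) :
    ∀ e ∈ edges l, ¬ pairEqV (a, b) e := by
  rintro e he (⟨rfl, -⟩ | ⟨rfl, -⟩)
  · exact ha (mem_of_mem_edges he).1
  · exact ha (mem_of_mem_edges he).2

namespace Walk

variable {n : ℕ} {s : State} {l : List V}

lemma head? (h : Walk n s l) : l.head? = some (Sum.inl s.vertex) := by
  induction h <;> simp_all [State.vertex]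

lemma getLast? (h : Walk n s l) : l.getLast? = some (Sum.inl n) := by
  induction h <;> simp_all [List.getLast?_cons]

lemma vertex_le (h : Walk n s l) : s.vertex ≤ n := by
  induction h <;> simp_all [State.vertex] <;> omega

lemma outer_bounds (h : Walk n s l) {v : ℕ} (hv : Sum.inl v ∈ l) : s.outerBound ≤ v := by
  induction h <;> simp_all [State.outerBound] <;> grind

lemma inner_bounds (h : Walk n s l) {i : ℕ} (hi : Sum.inr i ∈ l) :
    s.innerBound ≤ i := by
  induction h <;> simp only [List.mem_cons, List.not_mem_nil, reduceCtorEq, Sum.inr.injEq, or_false,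
    false_or, State.innerBound] at * <;> grind

lemma stepsOK_add_two {j0 p : ℕ} {es : List (V × V)} :
    StepsOK n j0 (p + 2) es ↔ StepsOK n j0 p es := by
  induction es generalizing p with
  | nil => simp [StepsOK, parity_simps]
  | cons e es ih =>
    simp only [StepsOK, StepOK, Nat.odd_add, Nat.even_add, show p + 2 + 1 = p + 1 + 2 by ring, ih]
    simp

lemma stepsOK (h : Walk n s l) {j0 : ℕ} (h0 : 1 ≤ j0) (hj : j0 ≤ s.idx) :
    StepsOK n j0 s.parity (edges l) := by
  induction h with
  | @free_near k l h ih =>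
    have := h.vertex_le
    simp only [State.idx, State.vertex] at *
    rw [edges_cons h.head?]
    exact ⟨⟨by simp [ZJoins, ZEdge, State.vertex]; omega, by simp [State.parity],
      by simp [isSig], by simp [isTau]⟩, ih hj⟩
  | @free_far k l h ih =>
    have := h.vertex_le
    simp only [State.idx, State.vertex] at *
    rw [edges_cons h.head?]
    exact ⟨⟨by simp [ZJoins, ZEdge, State.vertex]; omega, by simp [State.parity],
      by simp [isSig], by simp [isTau]⟩, ih hj⟩
  | near_end => simp [edges, StepsOK, State.parity]
  | @near_up u l hu h ih =>
    simp only [State.idx] at *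
    rw [edges_cons h.head?]
    refine ⟨⟨by simp [ZJoins, ZEdge, State.vertex]; omega, fun _ => ⟨2 * (u + 1), u + 1, ?_⟩,
      by simp [isSig], by simp [isTau]⟩, stepsOK_add_two.2 (ih (by omega))⟩
    simp [State.vertex]; omega
  | @near_inner u j l hu hn h ih =>
    simp only [State.idx] at *
    simp only [edges, edges_cons h.head?]
    refine ⟨⟨?_, fun _ => ⟨2 * u + 1, rfl⟩, fun _ => odd_one, by simp [isTau]⟩,
      ⟨?_, fun h => absurd h (by decide : ¬ Odd 2), by simp [isSig], fun _ => even_two⟩,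
      ⟨?_, fun _ => ⟨2 * j + 1, rfl⟩, fun _ => (by decide : Odd 3), by simp [isTau]⟩,
      stepsOK_add_two.2 <| stepsOK_add_two.2 (ih (by omega))⟩
    all_goals simp [ZJoins, State.vertex]; try omega
  | far_near h ih =>
    simp only [State.idx] at *
    exact ih (by omega)
  | @far_down u l hu h ih =>
    simp only [State.idx] at *
    simp only [edges, edges_cons h.head?]
    refine ⟨⟨?_, fun _ => ⟨2 * (u + 1), u + 1, ?_⟩, by simp [isSig], by simp [isTau]⟩,
      ⟨?_, fun h => absurd h (by decide : ¬ Odd 2), by simp [isSig], by simp [isTau]⟩,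
      stepsOK_add_two.2 (ih (by omega))⟩
    all_goals simp [ZJoins, ZEdge, State.vertex]; try omega

lemma crossBound_le (h : Walk n s l) {j0 : ℕ} :
    ∀ e ∈ edges l, ∀ m, ZCrossPos n j0 e m → s.crossBound ≤ m := by
  induction h with
  | free_near h ih | free_far h ih | near_up _ h ih | near_inner _ _ h ih
  | far_down _ h ih =>
    simp only [edges, edges_cons h.head?, List.forall_mem_cons]
    simp_all only [State.crossBound, State.vertex, ZCrossPos]
    grind
  | far_near h ih =>
    intro e he m hm
    have := ih e he m hm
    simp only [State.crossBound] at *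
    omega
  | near_end => simp [edges]

lemma pairwise_ahead (h : Walk n s l) {j0 : ℕ} : (edges l).Pairwise (Ahead n j0) := by
  induction h with
  | free_near h ih | free_far h ih | near_up _ h ih | near_inner _ _ h ih
  | far_down _ h ih =>
    have := h.crossBound_le (j0 := j0)
    simp only [edges, edges_cons h.head?, List.pairwise_cons, List.forall_mem_cons]
    simp_all only [State.crossBound, State.vertex, ZCrossPos, Ahead]
    grind
  | far_near h ih => exact ih
  | near_end => simp [edges]

lemma pairwise_not_pairEqV (h : Walk n s l) :
    (edges l).Pairwise (fun e e' => ¬ pairEqV e e') := by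
  induction h with
  | @free_near k l h ih =>
    rw [edges_cons h.head?, List.pairwise_cons]
    refine ⟨not_pairEqV_of_notMem fun hm => ?_, ih⟩
    have := h.outer_bounds hm
    simp [State.outerBound] at this
  | @free_far k l h ih =>
    rw [edges_cons h.head?, List.pairwise_cons]
    refine ⟨not_pairEqV_of_notMem fun hm => ?_, ih⟩
    have := h.outer_bounds hm
    simp [State.outerBound] at this
  | near_end => simp [edges]
  | near_up _ h ih =>
    rw [edges_cons h.head?, List.pairwise_cons]
    refine ⟨not_pairEqV_of_notMem fun hm => ?_, ih⟩
    have := h.outer_bounds hm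
    simp [State.outerBound] at this
  | @near_inner u j l hu hn h ih =>
    have e1 := edges_cons (a := Sum.inr j) h.head?
    have e2 : edges (Sum.inr u :: Sum.inr j :: l) = _ :: edges (Sum.inr j :: l) := rfl
    have e3 : edges (Sum.inl (u + 1) :: Sum.inr u :: Sum.inr j :: l) =
      _ :: edges (Sum.inr u :: Sum.inr j :: l) := rfl
    rw [e3, List.pairwise_cons, e2, List.pairwise_cons, ← e2, e1, List.pairwise_cons, ← e1]
    refine ⟨not_pairEqV_of_notMem fun hm => ?_, not_pairEqV_of_notMem fun hm => ?_,
      not_pairEqV_of_notMem fun hm => ?_, ih⟩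
    · have := h.outer_bounds (v := u + 1) (by simpa using hm)
      simp [State.outerBound] at this
      omega
    · have := h.inner_bounds (i := u) (by simpa [hu.ne] using hm)
      simp [State.innerBound] at this
      omega
    · have := h.inner_bounds hm
      simp [State.innerBound] at this
  | far_near h ih => exact ih
  | @far_down u l hu h ih =>
    have hm : Sum.inl (u + 1) ∉ l := fun hm => by
      have := h.outer_bounds hm
      simp [State.outerBound] at this
    simp only [edges, edges_cons h.head?, List.pairwise_cons, List.forall_mem_cons]
    refine ⟨⟨by simp [pairEqV, State.vertex], fun e he hp => ?_⟩, not_pairEqV_of_notMem hm, ih⟩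
    refine not_pairEqV_of_notMem (b := Sum.inl (u + 2)) hm e he ?_
    simp only [pairEqV] at hp ⊢
    tauto

end Walk

/-- The list form of the conditions on the final segment of a super `T`-path that starts with the
step numbered `p` and whose crossings all occur at positions satisfying `B`. -/
structure IsSegment (n j0 p : ℕ) (B : ℕ → Prop) (l : List V) : Prop where
  steps : StepsOK n j0 p (edges l)
  ahead : (edges l).Pairwise (Ahead n j0)
  last : l.getLast? = some (Sum.inl n)
  bound : ∀ e ∈ edges l, ∀ m, ZCrossPos n j0 e m → B m

namespace IsSegment

variable {n j0 p : ℕ} {B B' : ℕ → Prop} {a b : V} {l : List V}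

lemma step (h : IsSegment n j0 p B (a :: b :: l)) : StepOK n j0 p (a, b) := h.steps.1

lemma bound_step (h : IsSegment n j0 p B (a :: b :: l)) {m : ℕ} (hm : ZCrossPos n j0 (a, b) m) :
    B m := h.bound _ (by simp [edges]) m hm

lemma tail (h : IsSegment n j0 p B (a :: b :: l))
    (hB : ∀ e ∈ edges (b :: l), ∀ m, ZCrossPos n j0 e m → B m →
      (∀ c, ZCrossPos n j0 (a, b) c → c < m) → B' m) :
    IsSegment n j0 (p + 1) B' (b :: l) where
  steps := h.steps.2
  ahead := (List.pairwise_cons.1 h.ahead).2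
  last := by simpa using h.last
  bound := fun e he m hm => hB e he m hm (h.bound e (by simp [edges, he]) m hm)
    fun c hc => (List.pairwise_cons.1 h.ahead).1 e he c m hc hm

lemma tail' (h : IsSegment n j0 p B (a :: b :: l))
    (hB : ∀ m, B m → (∀ c, ZCrossPos n j0 (a, b) c → c < m) → B' m) :
    IsSegment n j0 (p + 1) B' (b :: l) := h.tail fun _ _ m _ => hB m

lemma parity (h : IsSegment n j0 (p + 2) B l) : IsSegment n j0 p B l :=
  ⟨Walk.stepsOK_add_two.1 h.steps, h.ahead, h.last, h.bound⟩

/-- There is no way to reach `n` from a vertex all of whose crossing edges are already behind. -/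
lemma not_behind {z : ℕ} (h : IsSegment n j0 1 B (Sum.inl z :: l)) (hz : z < n)
    (hB : ∀ m, B m → 2 * z + 1 ≤ m) : False := by
  cases l with
  | nil => have := h.last; simp at this; omega
  | cons b l =>
    obtain ⟨m, hm⟩ := h.step.2.1 odd_one
    have h1 := hB m (h.bound_step hm)
    have h2 := h.step.1
    rcases b with v | i
    · obtain ⟨w, hw, -, -, rfl⟩ := hm
      omega
    · simp only [ZJoins, ZCrossPos] at *
      omega

lemma exists_of_even_inl {u : ℕ} (h : IsSegment n j0 0 B (Sum.inl u :: l)) :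
    ∃ v l', l = Sum.inl v :: l' ∧ ZEdge n u v := by
  cases l with
  | nil => have := h.steps; simp [edges, StepsOK] at this
  | cons b l =>
    rcases b with v | i
    · exact ⟨v, l, rfl, h.step.1⟩
    · exact absurd (h.step.2.2.1 trivial) (by decide)

lemma exists_of_odd_inl {u : ℕ} (h : IsSegment n j0 1 B (Sum.inl u :: l)) :
    (u = n ∧ l = []) ∨
      (∃ l', l = Sum.inl (u + 1) :: l' ∧ j0 + 1 ≤ u ∧ u + 2 ≤ n ∧
        ∀ m, ZCrossPos n j0 (Sum.inl u, Sum.inl (u + 1)) m ↔ m = 2 * u) ∨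
      (∃ w l', u = w + 1 ∧ l = Sum.inl w :: l' ∧ j0 + 1 ≤ w ∧ w + 2 ≤ n ∧
        ∀ m, ZCrossPos n j0 (Sum.inl u, Sum.inl w) m ↔ m = 2 * w) ∨
      ∃ i j l', u = i + 1 ∧ l = Sum.inr i :: Sum.inr j :: Sum.inl (j + 1) :: l' ∧
        i < j ∧ j + 2 ≤ n ∧ j0 ≤ i ∧ B (2 * i + 1) ∧
        IsSegment n j0 0 (fun m => 2 * (j + 1) ≤ m + 1) (Sum.inl (j + 1) :: l') := by
  rcases l with - | ⟨b, l⟩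
  · have := h.last
    simp at this
    exact .inl ⟨this, rfl⟩
  right
  obtain ⟨m, hm⟩ := h.step.2.1 odd_one
  rcases b with v | i
  · obtain ⟨w, ⟨rfl, rfl⟩ | ⟨rfl, rfl⟩, h1, h2, rfl⟩ := hm
    · refine .inl ⟨l, rfl, h1, h2, fun m => ?_⟩
      exact ⟨by rintro ⟨w, hw, -, -, rfl⟩; omega, fun hm => ⟨u, .inl ⟨rfl, rfl⟩, h1, h2, hm⟩⟩
    · refine .inr <| .inl ⟨v, l, rfl, rfl, h1, h2, fun m => ?_⟩
      exact ⟨by rintro ⟨w, hw, -, -, rfl⟩; omega, fun hm => ⟨v, .inr ⟨rfl, rfl⟩, h1, h2, hm⟩⟩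
  right; right
  obtain ⟨rfl, hi, hin⟩ := h.step.1
  have h1 := h.tail' (B' := fun m => 2 * i + 1 < m) fun m _ hc => hc _ rfl
  rcases l with - | ⟨b, l⟩
  · have := h1.steps
    exact absurd this (by decide : ¬ Odd 2)
  rcases b with v | j
  · exact absurd (h1.step.2.2.1 trivial) (by decide)
  obtain ⟨hij, -, -, hj0, hjn⟩ := h1.step.1
  have h2 := (h1.tail' (B' := fun m => 2 * i + 1 < m) fun m hm _ => hm).parity
  rcases l with - | ⟨b, l⟩
  · have := h2.last
    simp at this
  rcases b with v | j'
  · obtain ⟨rfl, -⟩ := h2.step.1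
    have := h2.bound_step (m := 2 * j + 1) rfl
    refine ⟨i, j, l, rfl, rfl, by omega, hjn, hi, h.bound_step rfl,
      (h2.tail' fun m _ hc => ?_).parity⟩
    have := hc _ rfl
    omega
  · exact absurd (h2.step.2.2.2 trivial) (by decide)

lemma walk_aux (N : ℕ) : ∀ l : List V, l.length ≤ N →
    (∀ u, j0 ≤ u → IsSegment n j0 1 (fun m => 2 * u ≤ m + 1 ∧ m ≠ 2 * u)
      (Sum.inl (u + 1) :: l) → Walk n (.near u) (Sum.inl (u + 1) :: l)) ∧
    (∀ u, j0 ≤ u → IsSegment n j0 1 (fun m => 2 * u ≤ m + 1)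
      (Sum.inl (u + 2) :: l) → Walk n (.far u) (Sum.inl (u + 2) :: l)) ∧
    (∀ k, j0 ≤ k → IsSegment n j0 0 (fun m => 2 * k ≤ m + 1)
      (Sum.inl k :: l) → Walk n (.free k) (Sum.inl k :: l)) := by
  induction N using Nat.strong_induction_on with
  | _ N ih =>
  intro l hl
  have ih' : ∀ l' : List V, l'.length < l.length → _ :=
    fun l' h => ih l'.length (by omega) l' le_rfl
  clear ih hl
  have near : ∀ u, j0 ≤ u → IsSegment n j0 1 (fun m => 2 * u ≤ m + 1 ∧ m ≠ 2 * u)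
      (Sum.inl (u + 1) :: l) → Walk n (.near u) (Sum.inl (u + 1) :: l) := by
    intro u hu h
    rcases h.exists_of_odd_inl with ⟨rfl, rfl⟩ | ⟨l', rfl, h1, h2, h3⟩ |
      ⟨w, l', hw, rfl, h1, h2, h3⟩ | ⟨i, j, l', hi, rfl, hij, hjn, h1, h2, h3⟩
    · exact .near_end rfl
    · refine .near_up (by omega) ((ih' l' (by simp)).2.2 (u + 2) (by omega)
        (h.tail' fun m hm hc => ?_).parity)
      have := hc _ ((h3 _).2 rfl)
      omega
    · obtain rfl : u = w := by omega
      have := h.bound_step ((h3 _).2 rfl)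
      omega
    · obtain rfl : u = i := by omega
      exact .near_inner hij hjn ((ih' l' (by simp; omega)).2.2 (j + 1) (by omega) h3)
  refine ⟨near, ?_, ?_⟩
  · intro u hu h
    rcases h.exists_of_odd_inl with ⟨rfl, rfl⟩ | ⟨l', rfl, h1, h2, h3⟩ |
      ⟨w, l', hw, rfl, h1, h2, h3⟩ | ⟨i, j, l', hi, rfl, hij, hjn, h1, h2, h3⟩
    · exact .far_near (.near_end rfl)
    · refine .far_near (.near_up (by omega) ((ih' l' (by simp)).2.2 (u + 3) (by omega)
        (h.tail' fun m hm hc => ?_).parity))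
      have := hc _ ((h3 _).2 rfl)
      omega
    · obtain rfl : w = u + 1 := by omega
      have h4 := (h.tail' (B' := fun m => 2 * u + 2 < m) fun m hm hc =>
        hc _ ((h3 _).2 (by ring))).parity
      obtain ⟨v, l', rfl, hv⟩ := h4.exists_of_even_inl
      have h5 := h4.tail' (B' := fun m => 2 * u + 2 < m) fun m hm hc => hm
      obtain hv | rfl | rfl : v ≤ u ∨ v = u + 2 ∨ v = u + 3 := by
        simp only [ZEdge] at hv
        omega
      · exact (h5.not_behind (by omega) (by intros; omega)).elim
      · have := h4.bound_step (m := 2 * u + 2)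
          ⟨u + 1, .inl ⟨rfl, rfl⟩, h1, h2, by ring⟩
        omega
      · refine .far_down h2 ((ih' l' (by simp)).2.1 (u + 1) (by omega)
          ⟨h5.steps, h5.ahead, h5.last, fun e he m hm => ?_⟩)
        have := h5.bound e he m hm
        omega
    · obtain rfl : i = u + 1 := by omega
      exact .far_near (.near_inner hij hjn ((ih' l' (by simp; omega)).2.2 (j + 1) (by omega) h3))
  · intro k hk h
    obtain ⟨v, l', rfl, hv⟩ := h.exists_of_even_inl
    have h1 := h.tail' (B' := fun m => 2 * k ≤ m + 1) fun m hm hc => hm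
    obtain hv' | rfl | rfl : v + 1 ≤ k ∨ v = k + 1 ∨ v = k + 2 := by
      simp only [ZEdge] at hv
      omega
    · simp only [ZEdge] at hv
      exact (h1.not_behind (by omega) (by intros; omega)).elim
    · refine .free_near ((ih' l' (by simp)).1 k hk (h.tail fun e he m hm hB hc => ⟨hB, ?_⟩))
      rintro rfl
      have hk' : j0 + 1 ≤ k ∧ k + 2 ≤ n := by
        rcases e with ⟨a | a, b | b⟩
        · obtain ⟨w, -, hw⟩ := hm
          omega
        · simp only [ZCrossPos] at hm; omega
        · simp only [ZCrossPos] at hm; omega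
        · exact hm.elim
      exact lt_irrefl _ (hc _ ⟨k, .inl ⟨rfl, rfl⟩, hk'.1, hk'.2, rfl⟩)
    · exact .free_far ((ih' l' (by simp)).2.1 k hk h1)

lemma walk {k : ℕ} (hk : j0 ≤ k) (h : IsSegment n j0 0 (fun m => 2 * k ≤ m + 1) (Sum.inl k :: l)) :
    Walk n (.free k) (Sum.inl k :: l) :=
  (walk_aux _ l le_rfl).2.2 k hk h

end IsSegment

lemma edges_ofFn {m : ℕ} (f : Fin (m + 1) → V) :
    edges (List.ofFn f) = List.ofFn fun i : Fin m => (f i.castSucc, f i.succ) := by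
  induction m with
  | zero => simp [edges]
  | succ m ih =>
    have h := ih fun i => f i.succ
    rw [List.ofFn_succ, List.ofFn_succ] at *
    rw [edges, h]
    simp

lemma stepsOK_ofFn {n j0 m p : ℕ} (g : Fin m → V × V) :
    StepsOK n j0 p (List.ofFn g) ↔ (∀ i : Fin m, StepOK n j0 (p + i) (g i)) ∧ Odd (p + m) := by
  induction m generalizing p with
  | zero => simp [StepsOK]
  | succ m ih =>
    rw [List.ofFn_succ, StepsOK, ih, Fin.forall_fin_succ, and_assoc]
    simp [add_assoc, add_comm 1]

/-- The product of the scalar parts of the weights of the steps, numbered from `p` on. -/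
noncomputable def scalarWt (lam : ℕ → ℕ → A) (sqrt : A → A) : ℕ → List (V × V) → A
  | _, [] => 1
  | p, e :: es => stepWt lam sqrt p e * scalarWt lam sqrt (p + 1) es

/-- The weight of a list of vertices whose first step is numbered `p`. -/
noncomputable def listWt (n : ℕ) (lam : ℕ → ℕ → A) (θ : ℕ → A) (sqrt : A → A) (p : ℕ)
    (l : List V) : A :=
  scalarWt lam sqrt p (edges l) *
    ((sortB (posBefore n) ((edges l).filterMap sigIdx)).map θ).prod

lemma scalarWt_ofFn (lam : ℕ → ℕ → A) (sqrt : A → A) {m p : ℕ} (g : Fin m → V × V) :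
    scalarWt lam sqrt p (List.ofFn g) =
      ((List.finRange m).map fun i : Fin m => stepWt lam sqrt (p + i) (g i)).prod := by
  induction m generalizing p with
  | zero => simp [scalarWt]
  | succ m ih =>
    rw [List.ofFn_succ, scalarWt, ih, List.finRange_succ]
    simp [Function.comp_def, add_assoc, add_comm 1]

lemma two_mul_le_of_zCrossPos {n j0 m : ℕ} {a b : V} (hj : ZJoins n j0 a b)
    (hm : ZCrossPos n j0 (a, b) m) : 2 * j0 ≤ m + 1 := by
  rcases a with a | a <;> rcases b with b | b
  · obtain ⟨w, -, hw⟩ := hm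
    omega
  · simp only [ZJoins, ZCrossPos] at *
    omega
  · simp only [ZJoins, ZCrossPos] at *
    omega
  · exact hm.elim

namespace SuperTPath

variable {n k : ℕ} {rev : Bool}

/-- The list of vertices of a super `T`-path. -/
def toList (t : SuperTPath n k rev) : List V := List.ofFn t.vert

lemma toList_injective : Function.Injective (toList : SuperTPath n k rev → List V) := by
  intro t t' h
  have h' := List.ofFn_inj'.1 h
  cases t; cases t'
  simp only [Sigma.mk.injEq, add_left_inj] at h'
  obtain ⟨rfl, h'⟩ := h'
  simpa using h'

lemma wt_eq_listWt (lam : ℕ → ℕ → A) (θ : ℕ → A) (sqrt : A → A) (t : SuperTPath n k rev) :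
    wt n lam θ sqrt t = listWt n lam θ sqrt 0 t.toList := by
  rw [wt, listWt, toList, edges_ofFn, scalarWt_ofFn, List.ofFn_eq_map, List.filterMap_map]
  simp only [zero_add]
  rfl

lemma walk_toList (t : SuperTPath n k false) : Walk n (.free k) t.toList := by
  have hl : t.toList = Sum.inl k :: t.toList.tail := by
    have := t.first_eq
    rw [toList, List.ofFn_succ, this]
    simp
  rw [hl]
  refine IsSegment.walk le_rfl ?_
  rw [← hl]
  refine ⟨?_, ?_, ?_, ?_⟩
  · rw [toList, edges_ofFn, stepsOK_ofFn]
    refine ⟨fun i => ?_, by simpa using t.odd_len⟩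
    rw [zero_add]
    exact ⟨t.joins i, t.even_cross i, t.sig_even i, t.tau_odd i⟩
  · rw [toList, edges_ofFn, List.pairwise_ofFn]
    intro i j hij m m' hm hm'
    simpa using t.cross_mono i j hij m m' hm hm'
  · have := t.last_eq
    rw [toList, List.ofFn_succ', List.concat_eq_append, List.getLast?_append, this]
    simp
  · rw [toList, edges_ofFn]
    intro e he m hm
    obtain ⟨i, rfl⟩ := (List.mem_ofFn' _ _).1 he
    exact two_mul_le_of_zCrossPos (t.joins i) hm

lemma exists_toList_eq (hk : 1 ≤ k) {l : List V} (h : Walk n (.free k) l) :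
    ∃ t : SuperTPath n k false, t.toList = l := by
  obtain ⟨m, f, rfl⟩ : ∃ m, ∃ f : Fin (m + 1) → V, l = List.ofFn f := by
    rcases l with - | ⟨a, l⟩
    · simpa using h.head?
    · exact ⟨l.length, (a :: l).get, (List.ofFn_get _).symm⟩
  have hs := h.stepsOK hk le_rfl
  have ha := h.pairwise_ahead (j0 := k)
  have hp := h.pairwise_not_pairEqV
  rw [edges_ofFn] at hs ha hp
  rw [stepsOK_ofFn] at hs
  rw [List.pairwise_ofFn] at ha hp
  simp only [State.parity, zero_add] at hs
  refine ⟨⟨m, f, hs.2, ?_, ?_, fun i => (hs.1 i).1, fun i i' hii => ?_, fun i => (hs.1 i).2.1,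
    fun i => (hs.1 i).2.2.1, fun i => (hs.1 i).2.2.2, fun i i' hii => ?_⟩, rfl⟩
  · have := h.head?
    simpa [State.vertex, List.ofFn_succ] using this
  · have := h.getLast?
    rw [List.ofFn_succ', List.concat_eq_append, List.getLast?_append] at this
    simpa using this
  · rcases lt_or_gt_of_ne hii with hlt | hlt
    · exact hp hlt
    · intro hq
      refine hp hlt ?_
      simp only [pairEqV] at hq ⊢
      tauto
  · simpa [Ahead] using ha hii

lemma range_toList (hk : 1 ≤ k) :
    Set.range (toList : SuperTPath n k false → List V) = {l | Walk n (.free k) l} := by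
  ext l
  exact ⟨by rintro ⟨t, rfl⟩; exact t.walk_toList, exists_toList_eq hk⟩

end SuperTPath

lemma perm_insB {α : Type*} (le : α → α → Bool) (x : α) (l : List α) :
    (insB le x l).Perm (x :: l) := by
  induction l with
  | nil => rfl
  | cons y l ih =>
    rw [insB]
    split
    · rfl
    · exact (ih.cons y).trans (.swap x y l)

lemma perm_sortB {α : Type*} (le : α → α → Bool) (l : List α) : (sortB le l).Perm l := by
  induction l with
  | nil => rfl
  | cons x l ih => exact (perm_insB le x _).trans (ih.cons x)

lemma insB_posBefore {n i : ℕ} {l : List ℕ} (hl : ∀ x ∈ l, i < x) :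
    insB (posBefore n) i l = if thetaRight n i then i :: l else l ++ [i] := by
  induction l with
  | nil => simp [insB]
  | cons y l ih =>
    rw [List.forall_mem_cons] at hl
    rw [insB, posBefore, if_pos hl.1, ih hl.2]
    split <;> simp

lemma sortB_posBefore_cons {n i : ℕ} {l : List ℕ} (hl : ∀ x ∈ l, i < x) :
    sortB (posBefore n) (i :: l) =
      if thetaRight n i then i :: sortB (posBefore n) l else sortB (posBefore n) l ++ [i] :=
  insB_posBefore fun x hx => hl x ((perm_sortB _ l).mem_iff.1 hx)

/-- The product of `θ i` and `x` in the order prescribed for the triangle `i` and the odd elements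
of later triangles. -/
def orderedMul (n : ℕ) (θ : ℕ → A) (i : ℕ) (x : A) : A :=
  if thetaRight n i then θ i * x else x * θ i

lemma orderedMul_mul {c : A} (hc : c ∈ Subring.center A) (n : ℕ) (θ : ℕ → A) (i : ℕ) (x : A) :
    orderedMul n θ i (c * x) = c * orderedMul n θ i x := by
  unfold orderedMul
  split
  · rw [← mul_assoc, Subring.mem_center_iff.1 hc, mul_assoc]
  · rw [mul_assoc]

lemma orderedMul_sum (n : ℕ) (θ : ℕ → A) (i : ℕ) (s : Finset ℕ) (f : ℕ → A) :
    orderedMul n θ i (∑ j ∈ s, f j) = ∑ j ∈ s, orderedMul n θ i (f j) := by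
  unfold orderedMul
  split
  · rw [Finset.mul_sum]
  · rw [Finset.sum_mul]

/-- The product of the elements `θ i`, for `i` in the list `l`, in the positive ordering. -/
def oddWt (n : ℕ) (θ : ℕ → A) (l : List ℕ) : A := ((sortB (posBefore n) l).map θ).prod

lemma oddWt_cons (n : ℕ) (θ : ℕ → A) {i : ℕ} {l : List ℕ} (hl : ∀ x ∈ l, i < x) :
    oddWt n θ (i :: l) = orderedMul n θ i (oddWt n θ l) := by
  rw [oddWt, sortB_posBefore_cons hl, orderedMul]
  split <;> simp [oddWt]

lemma mul_prod_map_eq {θ : ℕ → A} {i : ℕ} {l : List ℕ}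
    (h : ∀ x ∈ l, θ i * θ x = -(θ x * θ i)) :
    θ i * (l.map θ).prod = (-1) ^ l.length * ((l.map θ).prod * θ i) := by
  induction l with
  | nil => simp
  | cons y l ih =>
    rw [List.forall_mem_cons] at h
    simp only [List.map_cons, List.prod_cons, List.length_cons, ← mul_assoc, h.1]
    rw [neg_mul, mul_assoc, ih h.2, pow_succ, ← mul_assoc (θ y),
      ← (((Commute.one_left (θ y)).neg_left).pow_left l.length).eq]
    simp [mul_assoc]

lemma commute_oddWt {n i : ℕ} {θ : ℕ → A} {l : List ℕ}
    (h : ∀ x ∈ l, θ i * θ x = -(θ x * θ i)) (hl : Even l.length) :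
    Commute (θ i) (oddWt n θ l) := by
  have hp := perm_sortB (posBefore n) l
  have := mul_prod_map_eq (l := sortB (posBefore n) l) (θ := θ) (i := i)
    fun x hx => h x (hp.mem_iff.1 hx)
  rwa [hp.length_eq, hl.neg_one_pow, one_mul] at this

lemma oddWt_cons_cons {n i j : ℕ} {θ : ℕ → A} {l : List ℕ} (hij : i < j) (hl : ∀ x ∈ l, j < x)
    (h : ∀ x ∈ l, θ i * θ x = -(θ x * θ i)) (h' : ∀ x ∈ l, θ j * θ x = -(θ x * θ j))
    (he : Even l.length) :
    oddWt n θ (i :: j :: l) = orderedMul n θ i (θ j) * oddWt n θ l := by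
  have hl' : ∀ x ∈ j :: l, i < x := by
    rw [List.forall_mem_cons]
    exact ⟨hij, fun x hx => hij.trans (hl x hx)⟩
  have hj : oddWt n θ (j :: l) = θ j * oddWt n θ l := by
    rw [oddWt_cons n θ hl, orderedMul, (commute_oddWt h' he).eq, ite_self]
  rw [oddWt_cons n θ hl', hj]
  unfold orderedMul
  split
  · rw [mul_assoc]
  · rw [mul_assoc, mul_assoc, (commute_oddWt h he).eq]

section ListWt

variable {n : ℕ} {lam : ℕ → ℕ → A} {θ : ℕ → A} {sqrt : A → A}

lemma scalarWt_add_two (p : ℕ) (es : List (V × V)) :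
    scalarWt lam sqrt (p + 2) es = scalarWt lam sqrt p es := by
  induction es generalizing p with
  | nil => rfl
  | cons e es ih =>
    rw [scalarWt, scalarWt, show p + 2 + 1 = p + 1 + 2 by ring, ih]
    congr 1
    rcases e with ⟨a | a, b | b⟩ <;> simp [stepWt]

lemma listWt_add_two (p : ℕ) (l : List V) :
    listWt n lam θ sqrt (p + 2) l = listWt n lam θ sqrt p l := by
  rw [listWt, scalarWt_add_two, listWt]

lemma listWt_cons {a b : V} {l : List V} (p : ℕ) (hl : l.head? = some b)
    (hab : sigIdx (a, b) = none) :
    listWt n lam θ sqrt p (a :: l) =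
      stepWt lam sqrt p (a, b) * listWt n lam θ sqrt (p + 1) l := by
  simp [listWt, edges_cons hl, scalarWt, hab, mul_assoc]

lemma scalarWt_mem_center
    (hstep : ∀ p a b, ZJoins n 1 a b → stepWt lam sqrt p (a, b) ∈ Subring.center A)
    {p : ℕ} {es : List (V × V)} (h : StepsOK n 1 p es) :
    scalarWt lam sqrt p es ∈ Subring.center A := by
  induction es generalizing p with
  | nil => exact one_mem _
  | cons e es ih => exact mul_mem (hstep _ _ _ h.1.1) (ih h.2)

end ListWt

namespace Walk

variable {n : ℕ} {s : State} {l : List V}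

lemma innerBound_le_of_mem (h : Walk n s l) :
    ∀ i ∈ (edges l).filterMap sigIdx, s.innerBound ≤ i ∧ i + 2 ≤ n := by
  induction h with
  | far_near h ih =>
    simp only [State.innerBound] at *
    grind
  | near_end => simp [edges]
  | free_near h ih | free_far h ih | near_up _ h ih | near_inner _ _ h ih | far_down _ h ih =>
    simp only [edges, edges_cons h.head?, List.filterMap_cons, sigIdx, State.innerBound] at *
    grind

lemma even_length (h : Walk n s l) : Even ((edges l).filterMap sigIdx).length := by
  induction h with
  | far_near h ih => exact ih
  | near_end => simp [edges]
  | free_near h ih | free_far h ih | near_up _ h ih | near_inner _ _ h ih | far_down _ h ih =>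
    simpa [edges, edges_cons h.head?, List.filterMap_cons, sigIdx, parity_simps] using ih

lemma free_iff {k : ℕ} : Walk n (.free k) l ↔
    (∃ l', Walk n (.near k) l' ∧ l = Sum.inl k :: l') ∨
      ∃ l', Walk n (.far k) l' ∧ l = Sum.inl k :: l' := by
  constructor
  · rintro (h | h)
    · exact .inl ⟨_, h, rfl⟩
    · exact .inr ⟨_, h, rfl⟩
  · rintro (⟨l', h, rfl⟩ | ⟨l', h, rfl⟩)
    · exact .free_near h
    · exact .free_far h

lemma near_iff {u : ℕ} : Walk n (.near u) l ↔
    (u + 1 = n ∧ l = [Sum.inl (u + 1)]) ∨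
    (u + 3 ≤ n ∧ ∃ l', Walk n (.free (u + 2)) l' ∧ l = Sum.inl (u + 1) :: l') ∨
    ∃ j ∈ Finset.Ico (u + 1) (n - 1), ∃ l', Walk n (.free (j + 1)) l' ∧
      l = Sum.inl (u + 1) :: Sum.inr u :: Sum.inr j :: l' := by
  constructor
  · rintro (_ | _ | h | ⟨hu, h⟩ | ⟨hu, hj, h⟩)
    · exact .inl ⟨h, rfl⟩
    · exact .inr (.inl ⟨hu, _, h, rfl⟩)
    · exact .inr (.inr ⟨_, Finset.mem_Ico.2 ⟨by omega, by omega⟩, _, h, rfl⟩)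
  · rintro (⟨h, rfl⟩ | ⟨hu, l', h, rfl⟩ | ⟨j, hj, l', h, rfl⟩)
    · exact .near_end h
    · exact .near_up hu h
    · rw [Finset.mem_Ico] at hj
      exact .near_inner (by omega) (by omega) h

lemma far_iff {u : ℕ} : Walk n (.far u) l ↔ Walk n (.near (u + 1)) l ∨
    (u + 3 ≤ n ∧ ∃ l', Walk n (.far (u + 1)) l' ∧
      l = Sum.inl (u + 2) :: Sum.inl (u + 1) :: l') := by
  constructor
  · intro h
    cases h with
    | far_near h => exact .inl h
    | far_down hu h => exact .inr ⟨hu, _, h, rfl⟩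
  · rintro (h | ⟨hu, l', h, rfl⟩)
    · exact .far_near h
    · exact .far_down hu h

end Walk

/-- Finitely many elements satisfy `P`, and their `w`-values add up to `x`. -/
def SumsTo {α : Type*} (P : α → Prop) (w : α → A) (x : A) : Prop :=
  ∃ F : Finset α, (∀ l, l ∈ F ↔ P l) ∧ ∑ l ∈ F, w l = x

namespace SumsTo

variable {α : Type*} {P Q : α → Prop} {w : α → A} {x y : A}

lemma congr (h : SumsTo P w x) (hPQ : ∀ l, Q l ↔ P l) : SumsTo Q w x := by
  obtain ⟨F, hF, hx⟩ := h
  exact ⟨F, fun l => (hF l).trans (hPQ l).symm, hx⟩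

lemma zero (h : ∀ l, ¬ P l) : SumsTo P w 0 := ⟨∅, by simp [h], by simp⟩

lemma single (a : α) : SumsTo (· = a) w (w a) := ⟨{a}, by simp, by simp⟩

lemma or (hP : SumsTo P w x) (hQ : SumsTo Q w y) (hd : ∀ l, P l → ¬ Q l) :
    SumsTo (fun l => P l ∨ Q l) w (x + y) := by
  classical
  obtain ⟨F, hF, rfl⟩ := hP
  obtain ⟨G, hG, rfl⟩ := hQ
  refine ⟨F ∪ G, by simp [hF, hG], Finset.sum_union ?_⟩
  rw [Finset.disjoint_left]
  simpa [hF, hG] using hd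

lemma and_left {p : Prop} [Decidable p] (h : p → SumsTo P w x) :
    SumsTo (fun l => p ∧ P l) w (if p then x else 0) := by
  split_ifs with hp
  · simpa [hp] using h hp
  · exact zero (by simp [hp])

lemma image {β : Type*} {w' : β → A} {c : A} {f : α → β} (h : SumsTo P w x)
    (hf : Function.Injective f) (hw : ∀ l, P l → w' (f l) = c * w l) :
    SumsTo (fun l => ∃ l', P l' ∧ l = f l') w' (c * x) := by
  classical
  obtain ⟨F, hF, rfl⟩ := h
  refine ⟨F.image f, by simp [hF, eq_comm], ?_⟩
  rw [Finset.sum_image hf.injOn, Finset.mul_sum]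
  exact Finset.sum_congr rfl fun l hl => hw l ((hF l).1 hl)

lemma biUnion {ι : Type*} {P : ι → α → Prop} {x : ι → A} (s : Finset ι)
    (h : ∀ j ∈ s, SumsTo (P j) w (x j)) (hd : ∀ i j l, P i l → P j l → i = j) :
    SumsTo (fun l => ∃ j ∈ s, P j l) w (∑ j ∈ s, x j) := by
  classical
  induction s using Finset.induction_on with
  | empty => exact zero (by simp)
  | insert i s hi ih =>
    rw [Finset.sum_insert hi]
    refine ((h i (by simp)).or (ih fun j hj => h j (by simp [hj])) ?_).congr (by simp)
    rintro l hl ⟨j, hj, hl'⟩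
    exact hi (hd i j l hl hl' ▸ hj)

lemma finsum_mem (h : SumsTo P w x) : ∑ᶠ l ∈ {l | P l}, w l = x := by
  obtain ⟨F, hF, rfl⟩ := h
  rw [show {l | P l} = (F : Set α) by ext; simp [hF], finsum_mem_coe_finset]

end SumsTo

/-- The scalar part of the weight of the `σ`-edge of the triangle `i`. -/
noncomputable def sigScalar (lam : ℕ → ℕ → A) (sqrt : A → A) (i : ℕ) : A :=
  sqrt (lamE lam i (i + 2) *
    Ring.inverse (lamE lam i (i + 1) * lamE lam (i + 1) (i + 2)))

/-- The sum of the weights of the walks from `State.near u`, in terms of the sums `lamN k` for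
`State.free k`. -/
noncomputable def nearSum (n : ℕ) (lam : ℕ → ℕ → A) (θ : ℕ → A) (sqrt : A → A) (lamN : ℕ → A)
    (u : ℕ) : A :=
  (if u + 1 = n then 1 else 0) +
    ((if u + 3 ≤ n then Ring.inverse (lam (u + 1) (u + 2)) * lamN (u + 2) else 0) +
      ∑ j ∈ Finset.Ico (u + 1) (n - 1),
        sigScalar lam sqrt u * sigScalar lam sqrt j * orderedMul n θ u (θ j) * lamN (j + 1))

section Sums

variable {n : ℕ} {lam : ℕ → ℕ → A} {θ : ℕ → A} {sqrt : A → A} {lamN : ℕ → A}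
  (hstep : ∀ p a b, ZJoins n 1 a b → stepWt lam sqrt p (a, b) ∈ Subring.center A)
  (hanti : ∀ i j, 1 ≤ i → i ≤ n - 2 → 1 ≤ j → j ≤ n - 2 → θ i * θ j = -(θ j * θ i))

include hstep hanti in
lemma listWt_inner {u j : ℕ} {l : List V} (hu : 1 ≤ u) (hj : u < j) (hjn : j + 2 ≤ n)
    (h : Walk n (.free (j + 1)) l) :
    listWt n lam θ sqrt 1 (Sum.inl (u + 1) :: Sum.inr u :: Sum.inr j :: l) =
      sigScalar lam sqrt u * sigScalar lam sqrt j * orderedMul n θ u (θ j) *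
        listWt n lam θ sqrt 0 l := by
  have hc : scalarWt lam sqrt 0 (edges l) ∈ Subring.center A :=
    scalarWt_mem_center hstep (h.stepsOK le_rfl (by simp [State.idx]))
  have hb := h.innerBound_le_of_mem
  simp only [State.innerBound] at hb
  have hodd : oddWt n θ (u :: j :: (edges l).filterMap sigIdx) = _ :=
    oddWt_cons_cons hj (fun x hx => (hb x hx).1)
      (fun x hx => hanti _ _ (by omega) (by omega) (by have := hb x hx; omega)
        (by have := hb x hx; omega))
      (fun x hx => hanti _ _ (by omega) (by omega) (by have := hb x hx; omega)
        (by have := hb x hx; omega)) h.even_length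
  simp only [oddWt] at hodd
  simp only [listWt, edges, edges_cons h.head?, scalarWt, List.filterMap_cons, sigIdx, hodd,
    scalarWt_add_two, stepWt, sigScalar, one_mul, mul_assoc]
  rw [← mul_assoc (scalarWt _ _ _ _), ← mul_assoc _ (scalarWt _ _ _ _),
    ← Subring.mem_center_iff.1 hc]

include hstep hanti in
lemma sumsTo_near {u : ℕ} (hu : 1 ≤ u)
    (ih : ∀ k, u + 1 < k → k + 1 ≤ n →
      SumsTo (Walk n (.free k)) (listWt n lam θ sqrt 0) (lamN k)) :
    SumsTo (Walk n (.near u)) (listWt n lam θ sqrt 1) (nearSum n lam θ sqrt lamN u) := by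
  refine SumsTo.congr (.or (.and_left fun _ => ?_) (.or (.and_left fun hun => ?_)
    (.biUnion _ (fun j hj => ?_) ?_) ?_) ?_) fun l => Walk.near_iff
  · convert SumsTo.single (A := A) _
    simp [listWt, edges, scalarWt, sortB]
  · refine (ih (u + 2) (by omega) (by omega)).image (List.cons_injective) fun l hl => ?_
    rw [listWt_cons 1 hl.head? rfl, listWt_add_two 0]
    simp [stepWt, lamE, State.vertex]
  · rw [Finset.mem_Ico] at hj
    exact (ih (j + 1) (by omega) (by omega)).image (fun l l' h => by simpa using h) fun l hl =>
      listWt_inner hstep hanti hu (by omega) (by omega) hl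
  · rintro i j l ⟨l₁, -, rfl⟩ ⟨l₂, -, h⟩
    simp_all
  · rintro l ⟨-, l₁, hl, rfl⟩ ⟨j, -, l₂, -, h⟩
    have := hl.head?
    simp_all
  · rintro l ⟨-, rfl⟩ (⟨-, l', hl, h⟩ | ⟨j, -, l', -, h⟩)
    · have := hl.head?
      simp_all
    · simp at h

variable
  (hinv : ∀ u, 1 ≤ u → u + 1 ≤ n → Ring.inverse (lam u (u + 1)) * lam u (u + 1) = 1)
  (hrec : ∀ k, 1 ≤ k → k + 1 ≤ n → lamN k = lam k (k + 1) * nearSum n lam θ sqrt lamN k +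
    if k + 2 ≤ n then lam k (k + 2) * (Ring.inverse (lam (k + 1) (k + 2)) * lamN (k + 1)) else 0)

include hstep hanti hinv hrec in
lemma sumsTo_free_and_far (k : ℕ) (hk : 1 ≤ k) :
    (k + 1 ≤ n → SumsTo (Walk n (.free k)) (listWt n lam θ sqrt 0) (lamN k)) ∧
    (k + 2 ≤ n → SumsTo (Walk n (.far k)) (listWt n lam θ sqrt 1)
      (Ring.inverse (lam (k + 1) (k + 2)) * lamN (k + 1))) := by
  induction hd : n - k using Nat.strong_induction_on generalizing k with
  | _ d ih =>
  have near : ∀ u, 1 ≤ u → k ≤ u + 1 →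
      SumsTo (Walk n (.near u)) (listWt n lam θ sqrt 1) (nearSum n lam θ sqrt lamN u) :=
    fun u hu hku => sumsTo_near hstep hanti hu fun k' h1 h2 =>
      (ih (n - k') (by omega) k' (by omega) rfl).1 h2
  have far : k + 2 ≤ n → SumsTo (Walk n (.far k)) (listWt n lam θ sqrt 1)
      (Ring.inverse (lam (k + 1) (k + 2)) * lamN (k + 1)) := by
    intro hkn
    rw [hrec (k + 1) (by omega) (by omega), mul_add, ← mul_assoc,
      hinv (k + 1) (by omega) (by omega), one_mul, mul_ite, mul_zero, ← mul_assoc]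
    refine SumsTo.congr (.or (near (k + 1) (by omega) (by omega)) (.and_left fun hk3 =>
      ((ih (n - (k + 1)) (by omega) (k + 1) (by omega) rfl).2 hk3).image
        (fun l l' h => by simpa using h) fun l hl => ?_) ?_) fun l => Walk.far_iff
    · rw [listWt_cons 1 (b := Sum.inl (k + 1)) rfl rfl, listWt_cons 2 hl.head? rfl,
        listWt_add_two 1]
      simp [stepWt, lamE, State.vertex, mul_assoc]
    · rintro l hl ⟨-, l', hl', rfl⟩
      rcases Walk.near_iff.1 hl with ⟨-, h⟩ | ⟨-, l₁, h₁, h⟩ | ⟨j, -, l₁, -, h⟩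
      · simp at h
      · simp only [List.cons.injEq, true_and] at h
        subst h
        have := h₁.head?
        simp [State.vertex] at this
      · simp at h
  refine ⟨fun hkn => ?_, far⟩
  rw [hrec k hk hkn]
  refine SumsTo.congr (.or ((near k hk (by omega)).image List.cons_injective fun l hl => ?_)
    (y := if k + 2 ≤ n then _ else _) ?_ ?_) fun l => Walk.free_iff
  · rw [listWt_cons 0 hl.head? rfl]
    simp [stepWt, lamE, State.vertex]
  · split_ifs with hk2
    · refine (far hk2).image List.cons_injective fun l hl => ?_
      rw [listWt_cons 0 hl.head? rfl]
      simp [stepWt, lamE, State.vertex]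
    · refine .zero ?_
      rintro l ⟨l', hl, -⟩
      exact hk2 hl.vertex_le
  · rintro l ⟨l₁, h₁, rfl⟩ ⟨l₂, h₂, h⟩
    have e₁ := h₁.head?
    have e₂ := h₂.head?
    simp_all [State.vertex]

end Sums

section Algebra

lemma exists_center_eq {x : A} (hx : x ∈ Subring.center A) : ∃ y : Subring.center A, (y : A) = x :=
  ⟨⟨x, hx⟩, rfl⟩

lemma mu_recursion_aux {x z N₀ N₁ N₂ s m₀ m₁ t S : A} (hx : x ∈ Subring.center A)
    (hz : z ∈ Subring.center A) (h₀ : N₀ ∈ Subring.center A) (h₁ : N₁ ∈ Subring.center A)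
    (h₂ : N₂ ∈ Subring.center A) (hs : s ∈ Subring.center A) (hu : IsUnit z)
    (hm : m₀ * (N₀ * z) = t * (s * (x * z) * N₁) + m₁ * (x * N₂)) (hS : N₁ * N₂ * m₁ = z * S) :
    N₀ * N₁ * m₀ = x * (s * (N₁ * N₁) * t + S) := by
  obtain ⟨x, rfl⟩ := exists_center_eq hx
  obtain ⟨z, rfl⟩ := exists_center_eq hz
  obtain ⟨N₀, rfl⟩ := exists_center_eq h₀
  obtain ⟨N₁, rfl⟩ := exists_center_eq h₁
  obtain ⟨N₂, rfl⟩ := exists_center_eq h₂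
  obtain ⟨s, rfl⟩ := exists_center_eq hs
  refine hu.mul_left_cancel ?_
  have hm' : (N₀ * z) • m₀ = (s * (x * z) * N₁) • t + (x * N₂) • m₁ := by
    have hc (c : Subring.center A) (a : A) : c • a = a * c := (Subring.mem_center_iff.1 c.2 a).symm
    rw [hc, hc, hc]
    exact hm
  have hS' : (N₁ * N₂) • m₁ = z • S := hS
  change z • (N₀ * N₁) • m₀ = z • x • ((s * (N₁ * N₁)) • t + S)
  linear_combination (norm := module) N₁ • hm' + x • hS'

lemma lambda_recursion_aux {x z w N₀ N₁ N₂ s T S : A} (hx : x ∈ Subring.center A)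
    (hz : z ∈ Subring.center A) (hw : w ∈ Subring.center A)
    (h₀ : N₀ ∈ Subring.center A) (h₁ : N₁ ∈ Subring.center A)
    (h₂ : N₂ ∈ Subring.center A) (hs : s ∈ Subring.center A) (hu : IsUnit z)
    (hw1 : w * (z * z) = 1)
    (hN : z * z * (N₀ * N₀) = s * (x * z) * (s * (x * z)) * (N₁ * N₁) + x * x * (N₂ * N₂) +
      s * (x * z) * N₁ * (x * N₂) * T) (hS : N₁ * N₂ * T = z * S) :
    N₀ * N₀ = x * x * (w * (N₂ * N₂) + s * S) +
      s * (x * z) * (s * (x * z)) * (w * (N₁ * N₁)) := by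
  obtain ⟨x, rfl⟩ := exists_center_eq hx
  obtain ⟨z, rfl⟩ := exists_center_eq hz
  obtain ⟨w, rfl⟩ := exists_center_eq hw
  obtain ⟨N₀, rfl⟩ := exists_center_eq h₀
  obtain ⟨N₁, rfl⟩ := exists_center_eq h₁
  obtain ⟨N₂, rfl⟩ := exists_center_eq h₂
  obtain ⟨s, rfl⟩ := exists_center_eq hs
  have hw1' : w * (z * z) = 1 := Subtype.ext hw1
  refine (hu.mul hu).mul_left_cancel ?_
  have hN' : (z * z * (N₀ * N₀)) • (1 : A) = (s * (x * z) * (s * (x * z)) * (N₁ * N₁)) • (1 : A) +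
      (x * x * (N₂ * N₂)) • (1 : A) + (s * (x * z) * N₁ * (x * N₂)) • T := by
    simpa [Subring.smul_def] using hN
  have hS' : (N₁ * N₂) • T = z • S := hS
  suffices (z * z * (N₀ * N₀)) • (1 : A) = (x * x * (w * (z * z)) * (N₂ * N₂)) • (1 : A) +
      (z * z * (x * x) * s) • S +
      (s * (x * z) * (s * (x * z)) * (w * (z * z)) * (N₁ * N₁)) • (1 : A) by
    have key : (z * z * (N₀ * N₀)) • (1 : A) =
        (z * z) • ((x * x) • ((w * (N₂ * N₂)) • (1 : A) + s • S) +
        (s * (x * z) * (s * (x * z)) * (w * (N₁ * N₁))) • (1 : A)) := by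
      rw [this]
      module
    simpa [Subring.smul_def, mul_assoc, mul_add] using key
  rw [hw1']
  linear_combination (norm := module) hN' + (s * (x * z) * x) • hS'

end Algebra

/-- Theorem 6.4(b) of the paper.  Zig-zag triangulation of the
`n`-gon with triangles `θ_i = (i, i+1, i+2)` and the default orientation
`2 → 3 → ⋯ → n-1`, in a `ℚ`-algebra with a positive cone `Pos` of central
invertible even elements and a coherent multiplicative choice of square roots
`sqrt`; `lamN k = λ_{k,n}` and `muN k = [k,k+1,n]` are defined by the downward
super Ptolemy recursion obtained by flipping the arcs
`(n-1,n-2), (n-2,n-3), …, (k+2,k+1)` as in Theorem 6.4(a).  Then for every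
`1 ≤ k ≤ n-2`:  `λ_{k,n} = Σ_{t ∈ 𝒯_{k,n}} wt(t)`, the sum of the weights of
all super `T`-paths from `k` to `n` in the zig-zag triangulation. -/
theorem zigzag_lambda_length_expansion
    (A : Type*) [Ring A] [Algebra ℚ A] (n : ℕ) (hn : 4 ≤ n)
    (Pos : Set A) (sqrt : A → A)
    (hPosAdd : ∀ p ∈ Pos, ∀ q ∈ Pos, p + q ∈ Pos)
    (hPosMul : ∀ p ∈ Pos, ∀ q ∈ Pos, p * q ∈ Pos)
    (hPosInv : ∀ p ∈ Pos, Ring.inverse p ∈ Pos)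
    (hPosCentral : ∀ p ∈ Pos, ∀ x : A, p * x = x * p)
    (hPosUnit : ∀ p ∈ Pos, IsUnit p)
    (hsqrtSq : ∀ p ∈ Pos, sqrt p * sqrt p = p)
    (hsqrtMem : ∀ p ∈ Pos, sqrt p ∈ Pos)
    (hsqrtMul : ∀ p ∈ Pos, ∀ q ∈ Pos, sqrt (p * q) = sqrt p * sqrt q)
    (lam : ℕ → ℕ → A) (θ : ℕ → A) (lamN muN : ℕ → A)
    (hlamP : ∀ u v, u < v → ZEdge n u v → lam u v ∈ Pos)
    (hlamNP : ∀ k, 1 ≤ k → k ≤ n - 2 → lamN k ∈ Pos)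
    (hθ0 : ∀ i, 1 ≤ i → i ≤ n - 2 → θ i * θ i = 0)
    (hθanti : ∀ i j, 1 ≤ i → i ≤ n - 2 → 1 ≤ j → j ≤ n - 2 →
      θ i * θ j = -(θ j * θ i))
    (hbase1 : lamN (n - 2) = lam (n - 2) n)
    (hbase2 : lamN (n - 1) = lam (n - 1) n)
    (hbase3 : muN (n - 2) = θ (n - 2))
    (hrecLam : ∀ k, 1 ≤ k → k ≤ n - 3 →
      lam (k + 1) (k + 2) * lamN k
        = lam k (k + 2) * lamN (k + 1) + lam k (k + 1) * lamN (k + 2)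
          + sqrt (lam k (k + 2) * lamN (k + 1) * (lam k (k + 1) * lamN (k + 2)))
            * (if thetaRight n k then θ k * muN (k + 1) else muN (k + 1) * θ k))
    (hrecMu : ∀ k, 1 ≤ k → k ≤ n - 3 →
      muN k * sqrt (lamN k * lam (k + 1) (k + 2))
        = θ k * sqrt (lam k (k + 2) * lamN (k + 1))
          + muN (k + 1) * sqrt (lam k (k + 1) * lamN (k + 2))) :
    ∀ k, 1 ≤ k → k ≤ n - 2 →
      lamN k = ∑ᶠ t : SuperTPath n k false, wt n lam θ sqrt t := by
  obtain ⟨m, rfl⟩ : ∃ m, n = m + 2 := ⟨n - 2, by omega⟩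
  simp only [Nat.add_sub_cancel, show m + 2 - 1 = m + 1 by omega,
    show m + 2 - 3 = m - 1 by omega] at *
  have hc : ∀ {p}, p ∈ Pos → p ∈ Subring.center A := fun {p} hp =>
    Subring.mem_center_iff.2 fun g => (hPosCentral p hp g).symm
  have hl1 : ∀ i, 1 ≤ i → i ≤ m + 1 → lam i (i + 1) ∈ Pos := fun i h1 h2 =>
    hlamP _ _ (by omega) (by unfold ZEdge; omega)
  have hl2 : ∀ i, 1 ≤ i → i ≤ m → lam i (i + 2) ∈ Pos := fun i h1 h2 =>
    hlamP _ _ (by omega) (by unfold ZEdge; omega)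
  have hN : ∀ i, 1 ≤ i → i ≤ m + 1 → lamN i ∈ Pos := by
    intro i h1 h2
    rcases Nat.le_succ_iff.1 h2 with h | rfl
    · exact hlamNP i h1 h
    · exact hbase2 ▸ hl1 _ h1 h2
  have hinv : ∀ i, 1 ≤ i → i + 1 ≤ m + 2 →
      Ring.inverse (lam i (i + 1)) * lam i (i + 1) = 1 := fun i h1 h2 =>
    Ring.inverse_mul_cancel _ (hPosUnit _ (hl1 i h1 (by omega)))
  have hlamE : ∀ u v, ZEdge (m + 2) u v → lamE lam u v ∈ Pos := by
    intro u v h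
    unfold lamE
    unfold ZEdge at h
    exact hlamP _ _ (by omega) (by unfold ZEdge; omega)
  have hσP : ∀ i, 1 ≤ i → i ≤ m → sigScalar lam sqrt i ∈ Pos := by
    intro i h1 h2
    refine hsqrtMem _ (hPosMul _ (hlamE _ _ ?_) _ (hPosInv _ (hPosMul _ (hlamE _ _ ?_) _
      (hlamE _ _ ?_)))) <;> unfold ZEdge <;> omega
  have hσ : ∀ i, 1 ≤ i → i ≤ m → sqrt (lam i (i + 2)) =
      sigScalar lam sqrt i * (sqrt (lam i (i + 1)) * sqrt (lam (i + 1) (i + 2))) := by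
    intro i h1 h2
    have p0 := hl2 i h1 h2
    have p1 := hl1 i h1 (by omega)
    have p2 := hl1 (i + 1) (by omega) (by omega)
    have p12 := hPosMul _ p1 _ p2
    simp only [sigScalar, lamE, show min i (i + 2) = i by omega, show max i (i + 2) = i + 2 by omega,
      show min i (i + 1) = i by omega, show max i (i + 1) = i + 1 by omega,
      show min (i + 1) (i + 2) = i + 1 by omega, show max (i + 1) (i + 2) = i + 2 by omega]
    rw [← hsqrtMul _ p1 _ p2, ← hsqrtMul _ (hPosMul _ p0 _ (hPosInv _ p12)) _ p12, mul_assoc,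
      Ring.inverse_mul_cancel _ (hPosUnit _ p12), mul_one]
  have hstep : ∀ p a b, ZJoins (m + 2) 1 a b → stepWt lam sqrt p (a, b) ∈ Subring.center A := by
    rintro p (a | a) (b | b) h
    · unfold stepWt
      split_ifs
      exacts [hc (hlamE _ _ h), hc (hPosInv _ (hlamE _ _ h))]
    · exact hc (hσP b h.2.1 (by have := h.2.2; omega))
    · exact hc (hσP a h.2.1 (by have := h.2.2; omega))
    · exact one_mem _
  set M : ℕ → A := fun k => ∑ j ∈ Finset.Ico k (m + 1),
    sigScalar lam sqrt j * lamN (j + 1) * θ j with hM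
  have hMsucc : ∀ k, k ≤ m → M k = sigScalar lam sqrt k * lamN (k + 1) * θ k + M (k + 1) :=
    fun k hk => Finset.sum_eq_sum_Ico_succ_bot (by omega) _
  have hmu : ∀ k, k ≤ m → 1 ≤ k → sqrt (lamN k) * sqrt (lamN (k + 1)) * muN k =
      sqrt (lam k (k + 1)) * M k := by
    intro k hk
    induction hk using Nat.decreasingInduction with
    | self =>
      intro h1
      rw [hMsucc m le_rfl, hbase1, hbase2, hbase3, hσ m h1 le_rfl]
      simp only [hM, Finset.Ico_self, Finset.sum_empty, add_zero]
      have hx := Subring.mem_center_iff.1 (hc (hsqrtMem _ (hl1 m h1 (by omega))))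
      have hz := hsqrtSq _ (hl1 (m + 1) (by omega) le_rfl)
      rw [← mul_assoc (sigScalar lam sqrt m), mul_assoc _ _ (sqrt (lam (m + 1) (m + 2))), hz, hx]
      simp only [mul_assoc]
    | of_succ k hk ih =>
      intro h1
      have p0 := hN k h1 (by omega)
      have p1 := hN (k + 1) (by omega) (by omega)
      have p2 := hN (k + 2) (by omega) (by omega)
      have q1 := hl1 k h1 (by omega)
      have q2 := hl1 (k + 1) (by omega) (by omega)
      have := mu_recursion_aux (m₀ := muN k) (t := θ k) (hc (hsqrtMem _ q1)) (hc (hsqrtMem _ q2))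
        (hc (hsqrtMem _ p0)) (hc (hsqrtMem _ p1)) (hc (hsqrtMem _ p2)) (hc (hσP k h1 (by omega)))
        (hPosUnit _ (hsqrtMem _ q2)) ?_ (ih (by omega))
      · rwa [hsqrtSq _ p1, ← hMsucc k (by omega)] at this
      · rw [← hσ k h1 (by omega), ← hsqrtMul _ p0 _ q2, ← hsqrtMul _ (hl2 k h1 (by omega)) _ p1,
          ← hsqrtMul _ q1 _ p2]
        exact hrecMu k h1 (by omega)
  have hsum : ∀ u, 1 ≤ u → u ≤ m → (∑ j ∈ Finset.Ico (u + 1) (m + 1),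
      sigScalar lam sqrt u * sigScalar lam sqrt j * orderedMul (m + 2) θ u (θ j) * lamN (j + 1)) =
      sigScalar lam sqrt u * orderedMul (m + 2) θ u (M (u + 1)) := by
    intro u h1 h2
    rw [hM, orderedMul_sum, Finset.mul_sum]
    refine Finset.sum_congr rfl fun j hj => ?_
    rw [Finset.mem_Ico] at hj
    have hp := hc (hN (j + 1) (by omega) (by omega))
    rw [orderedMul_mul (mul_mem (hc (hσP j (by omega) (by omega))) hp), mul_assoc,
      Subring.mem_center_iff.1 hp (orderedMul _ _ _ _)]
    simp only [mul_assoc]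
  have hrec : ∀ k, 1 ≤ k → k + 1 ≤ m + 2 → lamN k = lam k (k + 1) *
      nearSum (m + 2) lam θ sqrt lamN k + if k + 2 ≤ m + 2 then
        lam k (k + 2) * (Ring.inverse (lam (k + 1) (k + 2)) * lamN (k + 1)) else 0 := by
    intro k h1 h2
    obtain rfl | rfl | h3 : k = m + 1 ∨ k = m ∨ k + 1 ≤ m := by omega
    · simp [nearSum, hbase2]
    · simp [nearSum, hbase1, hbase2, hinv (k + 1) (by omega) (by omega)]
    · have p0 := hN k h1 (by omega)
      have p1 := hN (k + 1) (by omega) (by omega)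
      have p2 := hN (k + 2) (by omega) (by omega)
      have q0 := hl2 k h1 (by omega)
      have q1 := hl1 k h1 (by omega)
      have q2 := hl1 (k + 1) (by omega) (by omega)
      rw [nearSum, if_neg (by omega), zero_add, if_pos (by omega), if_pos (by omega),
        show m + 2 - 1 = m + 1 by omega, hsum k h1 (by omega), ← hsqrtSq _ p0, ← hsqrtSq _ q0,
        ← hsqrtSq _ p1, ← hsqrtSq _ q1, ← hsqrtSq _ p2, hσ k h1 (by omega)]
      refine lambda_recursion_aux (T := orderedMul (m + 2) θ k (muN (k + 1)))
        (hc (hsqrtMem _ q1)) (hc (hsqrtMem _ q2)) (hc (hPosInv _ q2)) (hc (hsqrtMem _ p0))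
        (hc (hsqrtMem _ p1)) (hc (hsqrtMem _ p2)) (hc (hσP k h1 (by omega)))
        (hPosUnit _ (hsqrtMem _ q2)) ?_ ?_ ?_
      · rw [hsqrtSq _ q2]
        exact hinv _ (by omega) (by omega)
      · rw [← hσ k h1 (by omega), hsqrtSq _ p0, hsqrtSq _ p1, hsqrtSq _ p2, hsqrtSq _ q0,
          hsqrtSq _ q1, hsqrtSq _ q2, ← hsqrtMul _ q0 _ p1, ← hsqrtMul _ q1 _ p2,
          ← hsqrtMul _ (hPosMul _ q0 _ p1) _ (hPosMul _ q1 _ p2)]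
        exact hrecLam k h1 (by omega)
      · rw [← orderedMul_mul (mul_mem (hc (hsqrtMem _ p1)) (hc (hsqrtMem _ p2))),
          ← orderedMul_mul (hc (hsqrtMem _ q2)), hmu (k + 1) (by omega) (by omega)]
  intro k h1 h2
  have key := ((sumsTo_free_and_far hstep hθanti hinv hrec k h1).1 (by omega)).finsum_mem
  simp only [SuperTPath.wt_eq_listWt]
  rw [← finsum_mem_range SuperTPath.toList_injective (f := listWt (m + 2) lam θ sqrt 0),
    SuperTPath.range_toList h1, key]

end ZigZag
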